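/- Let μ⁻, μ⁺ be probability measures on ℝ^d with compact supports X⁻, X⁺ and let c : X⁻ × X⁺ → ℝ be continuous. Assume there exists an optimal transport plan γ₀ ∈ Opt(μ⁻,μ⁺) with Ent(γ₀ | μ⁻⊗μ⁺) < +∞. Then lim_{ε→0⁺} (v_ε − v_0)/ε = inf { Ent(γ | μ⁻⊗μ⁺) : γ ∈ Opt(μ⁻,μ⁺) }; equivalently, v_ε − v_0 = ε·inf_{γ ∈ Opt(μ⁻,μ⁺)} Ent(γ | μ⁻⊗μ⁺) + o(ε) as ε → 0⁺. -/

import Mathlib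

open MeasureTheory Real Set Filter Classical
open scoped ENNReal NNReal Topology

noncomputable section

/-- Relative entropy (Kullback–Leibler divergence) `Ent(γ | q)`, with values in `EReal`:
it equals `∫ ρ log ρ dq` if `γ = ρ·q` (with `ρ log ρ` integrable) and `+∞` otherwise. -/
def Ent {α : Type*} [MeasurableSpace α] (γ q : Measure α) : EReal :=
  if γ ≪ q ∧ Integrable (fun x => ((γ.rnDeriv q) x).toReal * Real.log ((γ.rnDeriv q) x).toReal) q
  then ((∫ x, ((γ.rnDeriv q) x).toReal * Real.log ((γ.rnDeriv q) x).toReal ∂q : ℝ) : EReal)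
  else ⊤

/-- Entropic optimal transport cost
`v_ε = inf { ∫ c dγ + ε Ent(γ | μ⁻ ⊗ μ⁺) : γ coupling of μ⁻ and μ⁺ }`. -/
def entCost {α β : Type*} [MeasurableSpace α] [MeasurableSpace β]
    (μm : Measure α) (μp : Measure β) (c : α × β → ℝ) (ε : ℝ) : EReal :=
  sInf {v : EReal | ∃ γ : Measure (α × β), IsProbabilityMeasure γ ∧ γ.fst = μm ∧ γ.snd = μp ∧
    v = ((∫ p, c p ∂γ : ℝ) : EReal) + (ε : EReal) * Ent γ (μm.prod μp)}

/-- Support of a measure: the set of points all of whose open neighbourhoods have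
positive measure. -/
def msupport {α : Type*} [TopologicalSpace α] [MeasurableSpace α] (μ : Measure α) : Set α :=
  {x | ∀ U : Set α, IsOpen U → x ∈ U → μ U ≠ 0}

open InformationTheory

/-- Quantitative form of the strict convexity of `klFun`. -/
lemma mul_abs_sub_add_klFun_midpoint_le {a b t : ℝ} (ha : 0 ≤ a) (hb : 0 ≤ b) :
    t * |a - b| + 2 * klFun ((a + b) / 2) ≤ klFun a + klFun b + t ^ 2 * (a + b) := by
  rcases (add_nonneg ha hb).eq_or_lt with h0 | h0
  · obtain rfl : a = 0 := by linarith
    obtain rfl : b = 0 := by linarith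
    norm_num
    linarith
  have hm : 0 < (a + b) / 2 := by linarith
  have key : ∀ x : ℝ, 0 ≤ x →
      2 * x - 2 * √x * √((a + b) / 2) ≤ x * log x - x * log ((a + b) / 2) := by
    intro x hx
    rcases hx.eq_or_lt with rfl | hx
    · simp
    have hsx : 0 < √x := Real.sqrt_pos.2 hx
    have hsm : 0 < √((a + b) / 2) := Real.sqrt_pos.2 hm
    have h := Real.log_le_sub_one_of_pos (div_pos hsm hsx)
    rw [Real.log_div hsm.ne' hsx.ne', Real.log_sqrt hm.le, Real.log_sqrt hx.le] at h
    have h2 : x * (√((a + b) / 2) / √x) = √x * √((a + b) / 2) := by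
      nth_rewrite 1 [← Real.mul_self_sqrt hx.le]
      field_simp
    have h3 := mul_le_mul_of_nonneg_left h hx.le
    rw [mul_sub, mul_sub, h2] at h3
    linarith
  have h1 := key a ha
  have h2 := key b hb
  have hab : t * |a - b| ≤ (√a - √b) ^ 2 / 2 + t ^ 2 * (a + b) := by
    have hf : a - b = (√a - √b) * (√a + √b) := by
      nlinarith [Real.sq_sqrt ha, Real.sq_sqrt hb]
    rw [hf, abs_mul, abs_of_nonneg (add_nonneg (Real.sqrt_nonneg a) (Real.sqrt_nonneg b))]
    rw [← sq_abs (√a - √b)]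
    nlinarith [sq_nonneg (|√a - √b| - t * (√a + √b)), Real.sq_sqrt ha, Real.sq_sqrt hb,
      mul_nonneg (sq_nonneg t) (sq_nonneg (√a - √b))]
  have hw := Real.sq_sqrt hm.le
  simp only [klFun_apply]
  nlinarith [sq_nonneg (√a + √b - 2 * √((a + b) / 2)), Real.sq_sqrt ha, Real.sq_sqrt hb]

section EntropyIntegral

variable {Ω : Type*} [MeasurableSpace Ω] {q : Measure Ω}

/-- The entropy of a density in `L¹`, written with `klFun` so as to make sense in `ℝ≥0∞`. -/
def lintegralKl (f : Lp ℝ 1 q) : ℝ≥0∞ := ∫⁻ x, ENNReal.ofReal (klFun (f x)) ∂q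

lemma lintegralKl_midpoint_le {f g : Lp ℝ 1 q} (hf : 0 ≤ f) (hg : 0 ≤ g) (hf1 : ‖f‖ ≤ 1)
    (hg1 : ‖g‖ ≤ 1) {t : ℝ} (ht : 0 ≤ t) :
    ENNReal.ofReal (t * ‖f - g‖) + 2 * lintegralKl ((1 / 2 : ℝ) • f + (1 / 2 : ℝ) • g) ≤
      lintegralKl f + lintegralKl g + ENNReal.ofReal (2 * t ^ 2) := by
  have hf0 := (Lp.coeFn_nonneg f).2 hf
  have hg0 := (Lp.coeFn_nonneg g).2 hg
  have hmeas (h : Lp ℝ 1 q) : AEMeasurable (fun x ↦ ENNReal.ofReal (klFun (h x))) q :=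
    (measurable_klFun.comp_aemeasurable (Lp.aestronglyMeasurable h).aemeasurable).ennreal_ofReal
  have hnorm (h : Lp ℝ 1 q) : AEMeasurable (fun x ↦ ‖h x‖ₑ) q :=
    (Lp.aestronglyMeasurable h).enorm
  have hle : ENNReal.ofReal (t ^ 2) * (ENNReal.ofReal ‖f‖ + ENNReal.ofReal ‖g‖) ≤
      ENNReal.ofReal (2 * t ^ 2) := by
    rw [← ENNReal.ofReal_add (norm_nonneg _) (norm_nonneg _), ← ENNReal.ofReal_mul (sq_nonneg t)]
    exact ENNReal.ofReal_le_ofReal (by nlinarith [sq_nonneg t])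
  refine le_trans ?_ (add_le_add_right hle _)
  rw [ENNReal.ofReal_mul ht]
  simp only [L1.ofReal_norm_eq_lintegral, lintegralKl]
  rw [← lintegral_const_mul'' _ (hnorm _), ← lintegral_const_mul'' _ (hmeas _),
    ← lintegral_add_left' ((hnorm _).const_mul _), ← lintegral_add_left' (hnorm _),
    ← lintegral_const_mul'' (f := fun x ↦ ‖f x‖ₑ + ‖g x‖ₑ) _ ((hnorm _).add (hnorm _)),
    ← lintegral_add_left' (hmeas _),
    ← lintegral_add_left' (f := fun x ↦ ENNReal.ofReal (klFun (f x)) + ENNReal.ofReal (klFun (g x)))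
      ((hmeas _).add (hmeas _))]
  refine lintegral_mono_ae ?_
  filter_upwards [hf0, hg0, Lp.coeFn_sub f g, Lp.coeFn_add ((1 / 2 : ℝ) • f) ((1 / 2 : ℝ) • g),
    Lp.coeFn_smul (1 / 2 : ℝ) f, Lp.coeFn_smul (1 / 2 : ℝ) g] with x hfx hgx hs ha h1 h2
  simp only [Pi.zero_apply] at hfx hgx
  have hmid : (((1 / 2 : ℝ) • f + (1 / 2 : ℝ) • g : Lp ℝ 1 q) : Ω → ℝ) x = (f x + g x) / 2 := by
    rw [ha, Pi.add_apply, h1, h2, Pi.smul_apply, Pi.smul_apply, smul_eq_mul, smul_eq_mul]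
    ring
  have hm : 0 ≤ (f x + g x) / 2 := by linarith
  rw [hs, hmid, Pi.sub_apply]
  simp only [← ofReal_norm, Real.norm_eq_abs]
  rw [abs_of_nonneg hfx, abs_of_nonneg hgx, ← ENNReal.ofReal_mul ht,
    show (2 : ℝ≥0∞) = ENNReal.ofReal 2 by norm_num, ← ENNReal.ofReal_mul (by norm_num),
    ← ENNReal.ofReal_add (by positivity) (mul_nonneg (by norm_num) (klFun_nonneg hm)),
    ← ENNReal.ofReal_add hfx hgx, ← ENNReal.ofReal_mul (sq_nonneg t),
    ← ENNReal.ofReal_add (klFun_nonneg hfx) (klFun_nonneg hgx),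
    ← ENNReal.ofReal_add (add_nonneg (klFun_nonneg hfx) (klFun_nonneg hgx)) (by positivity)]
  exact ENNReal.ofReal_le_ofReal (mul_abs_sub_add_klFun_midpoint_le hfx hgx)

lemma lintegralKl_le_of_tendsto {u : ℕ → Lp ℝ 1 q} {f : Lp ℝ 1 q}
    (hu : Tendsto u atTop (𝓝 f)) {M : ℝ≥0∞}
    (hM : Tendsto (fun n ↦ lintegralKl (u n)) atTop (𝓝 M)) : lintegralKl f ≤ M := by
  obtain ⟨φ, hφ, hae⟩ := (tendstoInMeasure_of_tendsto_Lp hu).exists_seq_tendsto_ae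
  rw [← (hM.comp hφ.tendsto_atTop).liminf_eq]
  refine le_trans (lintegral_mono_ae ?_) (lintegral_liminf_le' fun n ↦
    (measurable_klFun.comp_aemeasurable
      (Lp.aestronglyMeasurable (u (φ n))).aemeasurable).ennreal_ofReal)
  filter_upwards [hae] with x hx
  exact (ENNReal.tendsto_ofReal ((continuous_klFun.tendsto _).comp hx)).liminf_eq.ge

/-- A decreasing sequence of closed convex sets of densities on which the entropy sublevel set
`{lintegralKl ≤ M}` is nonempty has a common point of entropy at most `M`. -/
lemma exists_mem_iInter_lintegralKl_le {S : ℕ → Set (Lp ℝ 1 q)} (hanti : Antitone S)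
    (hconv : ∀ n, Convex ℝ (S n)) (hclosed : ∀ n, IsClosed (S n))
    (hnonneg : ∀ n, ∀ f ∈ S n, 0 ≤ f) (hnorm : ∀ n, ∀ f ∈ S n, ‖f‖ ≤ 1) {M : ℝ≥0∞}
    (hM : M ≠ ∞) (hne : ∀ n, ∃ f ∈ S n, lintegralKl f ≤ M) :
    ∃ f, (∀ n, f ∈ S n) ∧ lintegralKl f ≤ M := by
  let m : ℕ → ℝ≥0∞ := fun n ↦ ⨅ f ∈ S n, lintegralKl f
  have hmM n : m n ≤ M := by
    obtain ⟨f, hf, hfM⟩ := hne n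
    exact (iInf₂_le f hf).trans hfM
  have hmono : Monotone m := fun i j hij ↦ biInf_mono (hanti hij)
  have hmtop n : m n ≠ ∞ := ne_top_of_le_ne_top hM (hmM n)
  have hex : ∀ n : ℕ, ∃ f ∈ S n, lintegralKl f < m n + ENNReal.ofReal (1 / (n + 1 : ℝ)) := by
    intro n
    have : m n < m n + ENNReal.ofReal (1 / (n + 1 : ℝ)) :=
      ENNReal.lt_add_right (hmtop n) (by simp; positivity)
    simpa only [m, iInf_lt_iff, exists_prop] using this
  choose u huS hu using hex
  have hlim : Tendsto m atTop (𝓝 (⨆ n, m n)) := tendsto_atTop_iSup hmono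
  have hsup : (⨆ n, m n) ≤ M := iSup_le hmM
  have hsuptop : (⨆ n, m n) ≠ ∞ := ne_top_of_le_ne_top hM hsup
  have hδ : Tendsto (fun n : ℕ ↦ ENNReal.ofReal (1 / (n + 1 : ℝ))) atTop (𝓝 0) := by
    simpa using ENNReal.tendsto_ofReal tendsto_one_div_add_atTop_nhds_zero_nat
  have hulim : Tendsto (fun n ↦ lintegralKl (u n)) atTop (𝓝 (⨆ n, m n)) :=
    tendsto_of_tendsto_of_tendsto_of_le_of_le hlim (by simpa using hlim.add hδ)
      (fun n ↦ iInf₂_le (u n) (huS n)) (fun n ↦ (hu n).le)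
  have hcauchy : CauchySeq u := by
    have hutop n : lintegralKl (u n) ≠ ∞ :=
      ne_top_of_lt (hu n)
    have hgap : Tendsto (fun n ↦ (lintegralKl (u n)).toReal - (m n).toReal) atTop (𝓝 0) := by
      simpa using ((ENNReal.tendsto_toReal hsuptop).comp hulim).sub
        ((ENNReal.tendsto_toReal hsuptop).comp hlim)
    have hinc : Tendsto (fun n ↦ (⨆ n, m n).toReal - (m n).toReal) atTop (𝓝 0) := by
      simpa using (tendsto_const_nhds (x := (⨆ n, m n).toReal)).sub
        ((ENNReal.tendsto_toReal hsuptop).comp hlim)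
    rw [Metric.cauchySeq_iff']
    intro η hη
    have ht : 0 < η / 6 := by positivity
    obtain ⟨N, hN⟩ := eventually_atTop.1
      ((hgap.eventually_lt_const (show 0 < (η / 6) ^ 2 by positivity)).and
        (hinc.eventually_lt_const (show 0 < (η / 6) ^ 2 by positivity)))
    refine ⟨N, fun k hk ↦ ?_⟩
    rw [dist_eq_norm]
    have hkN : u k ∈ S N := hanti hk (huS k)
    have hmid := lintegralKl_midpoint_le (hnonneg _ _ hkN) (hnonneg _ _ (huS N))
      (hnorm _ _ hkN) (hnorm _ _ (huS N)) ht.le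
    have hmidm : m N ≤ lintegralKl ((1 / 2 : ℝ) • u k + (1 / 2 : ℝ) • u N) :=
      iInf₂_le _ (hconv N hkN (huS N) (by norm_num) (by norm_num) (by norm_num))
    have h := (add_le_add_right (mul_le_mul_right hmidm 2) _).trans hmid
    have h' := ENNReal.toReal_mono
      (ENNReal.add_ne_top.2 ⟨ENNReal.add_ne_top.2 ⟨hutop k, hutop N⟩, ENNReal.ofReal_ne_top⟩) h
    rw [ENNReal.toReal_add ENNReal.ofReal_ne_top (ENNReal.mul_ne_top (by norm_num) (hmtop N)),
      ENNReal.toReal_add (ENNReal.add_ne_top.2 ⟨hutop k, hutop N⟩) ENNReal.ofReal_ne_top,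
      ENNReal.toReal_add (hutop k) (hutop N), ENNReal.toReal_mul,
      ENNReal.toReal_ofReal (by positivity), ENNReal.toReal_ofReal (by positivity),
      ENNReal.toReal_ofNat] at h'
    have h1 := (hN N le_rfl).1
    have h2 := (hN N le_rfl).2
    have h3 := (hN k hk).1
    have h4 : (m k).toReal ≤ (⨆ n, m n).toReal := ENNReal.toReal_mono hsuptop (le_iSup m k)
    have h5 : η / 6 * ‖u k - u N‖ < η / 6 * η := by nlinarith
    exact lt_of_mul_lt_mul_left h5 ht.le
  obtain ⟨f, hf⟩ := cauchySeq_tendsto_of_complete hcauchy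
  refine ⟨f, fun n ↦ (hclosed n).mem_of_tendsto hf ?_,
    (lintegralKl_le_of_tendsto hf hulim).trans hsup⟩
  filter_upwards [eventually_ge_atTop n] with k hk
  exact hanti hk (huS k)

lemma exists_continuousLinearMap_eq_integral_mul {g : Ω → ℝ} (hg : AEStronglyMeasurable g q)
    {C : ℝ} (hC : ∀ᵐ x ∂q, ‖g x‖ ≤ C) :
    ∃ ℓ : Lp ℝ 1 q →L[ℝ] ℝ, ∀ f : Lp ℝ 1 q, ℓ f = ∫ x, f x * g x ∂q := by
  have hG : MemLp g ∞ q := memLp_top_of_bound hg C hC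
  refine ⟨(ContinuousLinearMap.mul ℝ ℝ).lpPairing q ∞ 1 (hG.toLp g), fun f ↦ ?_⟩
  rw [ContinuousLinearMap.lpPairing_eq_integral]
  refine integral_congr_ae ?_
  filter_upwards [hG.coeFn_toLp] with x hx
  rw [ContinuousLinearMap.mul_apply', hx, mul_comm]

lemma exists_continuousLinearMap_eq_setIntegral {A : Set Ω} (hA : MeasurableSet A) :
    ∃ ℓ : Lp ℝ 1 q →L[ℝ] ℝ, ∀ f : Lp ℝ 1 q, ℓ f = ∫ x in A, f x ∂q := by
  obtain ⟨ℓ, hℓ⟩ := exists_continuousLinearMap_eq_integral_mul (q := q) (g := A.indicator 1)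
    (stronglyMeasurable_one.indicator hA).aestronglyMeasurable (C := 1)
    (ae_of_all _ fun x ↦ by by_cases hx : x ∈ A <;> simp [hx])
  refine ⟨ℓ, fun f ↦ ?_⟩
  rw [hℓ, ← integral_indicator hA]
  congr with x
  by_cases hx : x ∈ A <;> simp [hx]

lemma convex_Ici_zero_Lp : Convex ℝ (Ici (0 : Lp ℝ 1 q)) := by
  intro f hf g hg a b ha hb _
  rw [mem_Ici, ← Lp.coeFn_nonneg] at hf hg ⊢
  filter_upwards [hf, hg, Lp.coeFn_add (a • f) (b • g), Lp.coeFn_smul a f, Lp.coeFn_smul b g]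
    with x hfx hgx h h1 h2
  rw [h, Pi.add_apply, h1, h2, Pi.smul_apply, Pi.smul_apply]
  exact add_nonneg (smul_nonneg ha hfx) (smul_nonneg hb hgx)

variable [IsFiniteMeasure q]

lemma exists_density_of_absolutelyContinuous {γ : Measure Ω} [IsFiniteMeasure γ] (h : γ ≪ q) :
    ∃ f : Lp ℝ 1 q, 0 ≤ f ∧ (∀ A, ∫ x in A, f x ∂q = γ.real A) ∧
      (∀ g : Ω → ℝ, ∫ x, f x * g x ∂q = ∫ x, g x ∂γ) ∧ lintegralKl f = klDiv γ q := by
  have hint : Integrable (fun x ↦ (γ.rnDeriv q x).toReal) q := Measure.integrable_toReal_rnDeriv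
  have hf := hint.coeFn_toL1
  refine ⟨hint.toL1, ?_, fun A ↦ ?_, fun g ↦ ?_, ?_⟩
  · rw [← Lp.coeFn_nonneg]
    filter_upwards [hf] with x hx
    rw [hx]
    exact ENNReal.toReal_nonneg
  · rw [integral_congr_ae (ae_restrict_of_ae hf), Measure.setIntegral_toReal_rnDeriv h]
  · rw [← integral_rnDeriv_smul h]
    refine integral_congr_ae ?_
    filter_upwards [hf] with x hx
    rw [hx, smul_eq_mul]
  · rw [klDiv_eq_lintegral_klFun_of_ac h]
    refine lintegral_congr_ae ?_
    filter_upwards [hf] with x hx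
    rw [hx]

lemma exists_measure_of_density {f : Lp ℝ 1 q} (hf : 0 ≤ f) :
    ∃ γ : Measure Ω, IsFiniteMeasure γ ∧ γ ≪ q ∧
      (∀ A, MeasurableSet A → γ.real A = ∫ x in A, f x ∂q) ∧
      (∀ g : Ω → ℝ, ∫ x, g x ∂γ = ∫ x, f x * g x ∂q) ∧ klDiv γ q = lintegralKl f := by
  have hf0 := (Lp.coeFn_nonneg f).2 hf
  have hint : Integrable f q := L1.integrable_coeFn f
  have hm : AEMeasurable (fun x ↦ ENNReal.ofReal (f x)) q := hint.aemeasurable.ennreal_ofReal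
  have hfin : IsFiniteMeasure (q.withDensity fun x ↦ ENNReal.ofReal (f x)) :=
    isFiniteMeasure_withDensity_ofReal hint.2
  have hac : q.withDensity (fun x ↦ ENNReal.ofReal (f x)) ≪ q := withDensity_absolutelyContinuous _ _
  refine ⟨q.withDensity fun x ↦ ENNReal.ofReal (f x), hfin, hac, fun A hA ↦ ?_, fun g ↦ ?_, ?_⟩
  · rw [measureReal_def, withDensity_apply _ hA,
      integral_eq_lintegral_of_nonneg_ae (ae_restrict_of_ae hf0)
        hint.aestronglyMeasurable.restrict]
  · rw [integral_withDensity_eq_integral_toReal_smul₀ hm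
      (ae_of_all _ fun _ ↦ ENNReal.ofReal_lt_top)]
    refine integral_congr_ae ?_
    filter_upwards [hf0] with x hx
    rw [ENNReal.toReal_ofReal hx, smul_eq_mul]
  · rw [klDiv_eq_lintegral_klFun_of_ac hac]
    refine lintegral_congr_ae ?_
    filter_upwards [hf0, Measure.rnDeriv_withDensity₀ q hm] with x hx hx'
    rw [hx', ENNReal.toReal_ofReal hx]

end EntropyIntegral

lemma Ent_eq_klDiv {Ω : Type*} [MeasurableSpace Ω] (γ q : Measure Ω) [IsProbabilityMeasure γ]
    [IsProbabilityMeasure q] : Ent γ q = (klDiv γ q : EReal) := by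
  unfold Ent
  split_ifs with h
  · obtain ⟨hac, hint⟩ := h
    rw [integral_rnDeriv_mul_log hac]
    rw [integrable_rnDeriv_mul_log_iff hac] at hint
    rw [← toReal_klDiv_of_measure_eq hac (by simp),
      EReal.coe_ennreal_toReal (klDiv_ne_top hac hint)]
  · rw [(klDiv_eq_top_iff (μ := γ) (ν := q)).2, EReal.coe_ennreal_top]
    intro hac hint
    exact h ⟨hac, (integrable_rnDeriv_mul_log_iff hac).2 hint⟩

section Coupling

variable {α β : Type*} [MeasurableSpace α] [MeasurableSpace β] {μm : Measure α} {μp : Measure β}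
  {c : α × β → ℝ}

/-- If couplings of entropy at most `M` have cost arbitrarily close to `v`, then some coupling of
entropy at most `M` has cost at most `v`. -/
lemma exists_coupling_of_forall_approx [IsProbabilityMeasure μm] [IsProbabilityMeasure μp]
    (hc : AEStronglyMeasurable c (μm.prod μp)) {C : ℝ}
    (hC : ∀ᵐ x ∂μm.prod μp, ‖c x‖ ≤ C) {v : ℝ} {M : ℝ≥0∞} (hM : M ≠ ∞)
    (h : ∀ n : ℕ, ∃ γ : Measure (α × β), IsProbabilityMeasure γ ∧ γ.fst = μm ∧ γ.snd = μp ∧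
      ∫ p, c p ∂γ ≤ v + 1 / (n + 1) ∧ klDiv γ (μm.prod μp) ≤ M) :
    ∃ γ : Measure (α × β), IsProbabilityMeasure γ ∧ γ.fst = μm ∧ γ.snd = μp ∧
      ∫ p, c p ∂γ ≤ v ∧ klDiv γ (μm.prod μp) ≤ M := by
  set q := μm.prod μp
  obtain ⟨ℓ, hℓ⟩ := exists_continuousLinearMap_eq_integral_mul hc hC
  choose ℓm hℓm using fun (A : Set α) (hA : MeasurableSet A) ↦
    exists_continuousLinearMap_eq_setIntegral (q := q) (measurable_fst (β := β) hA)
  choose ℓp hℓp using fun (B : Set β) (hB : MeasurableSet B) ↦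
    exists_continuousLinearMap_eq_setIntegral (q := q) (measurable_snd (α := α) hB)
  let S : ℕ → Set (Lp ℝ 1 q) := fun n ↦ Ici 0 ∩ (⋂ A, ⋂ hA, {f | ℓm A hA f = μm.real A}) ∩
    (⋂ B, ⋂ hB, {f | ℓp B hB f = μp.real B}) ∩ {f | ℓ f ≤ v + 1 / (n + 1)}
  have hS {n : ℕ} {f : Lp ℝ 1 q} : f ∈ S n ↔ ((0 ≤ f ∧ ∀ A hA, ℓm A hA f = μm.real A) ∧
      ∀ B hB, ℓp B hB f = μp.real B) ∧ ℓ f ≤ v + 1 / (n + 1) := by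
    simp only [S, mem_inter_iff, mem_iInter, mem_Ici, mem_ofPred_eq]
  have hnorm : ∀ n, ∀ f ∈ S n, ‖f‖ ≤ 1 := by
    intro n f hf
    obtain ⟨⟨⟨h0, hm⟩, -⟩, -⟩ := hS.1 hf
    have h1 := hm univ .univ
    rw [hℓm, preimage_univ, setIntegral_univ, probReal_univ] at h1
    rw [L1.norm_eq_integral_norm, ← h1]
    refine (integral_congr_ae ?_).le
    filter_upwards [(Lp.coeFn_nonneg f).2 h0] with x hx
    exact Real.norm_of_nonneg hx
  obtain ⟨f, hf, hfM⟩ := exists_mem_iInter_lintegralKl_le (S := S) (M := M)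
    (fun i j hij f hf ↦ hS.2 ⟨(hS.1 hf).1, (hS.1 hf).2.trans
      (add_le_add_right (Nat.one_div_le_one_div hij) v)⟩)
    (fun n ↦ (((convex_Ici_zero_Lp).inter (convex_iInter₂ fun A hA ↦
      convex_hyperplane (ℓm A hA).toLinearMap.isLinear _)).inter (convex_iInter₂ fun B hB ↦
      convex_hyperplane (ℓp B hB).toLinearMap.isLinear _)).inter
      (convex_halfSpace_le ℓ.toLinearMap.isLinear _))
    (fun n ↦ ((isClosed_Ici.inter (isClosed_iInter fun A ↦ isClosed_iInter fun hA ↦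
      isClosed_eq (ℓm A hA).continuous continuous_const)).inter
      (isClosed_iInter fun B ↦ isClosed_iInter fun hB ↦
        isClosed_eq (ℓp B hB).continuous continuous_const)).inter
      (isClosed_le ℓ.continuous continuous_const))
    (fun n f hf ↦ (hS.1 hf).1.1.1) hnorm hM fun n ↦ by
      obtain ⟨γ, hγ, hγm, hγp, hγc, hγM⟩ := h n
      have hac : γ ≪ q := by
        by_contra hac
        exact hM (top_le_iff.1 (klDiv_of_not_ac hac ▸ hγM))
      obtain ⟨f, h0, hA, hg, hI⟩ := exists_density_of_absolutelyContinuous hac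
      refine ⟨f, hS.2 ⟨⟨⟨h0, fun A hAm ↦ ?_⟩, fun B hBm ↦ ?_⟩, ?_⟩, hI.trans_le hγM⟩
      · rw [hℓm, hA, ← hγm, measureReal_def, measureReal_def, Measure.fst_apply hAm]
      · rw [hℓp, hA, ← hγp, measureReal_def, measureReal_def, Measure.snd_apply hBm]
      · rwa [hℓ, hg]
  obtain ⟨γ, hfin, hac, hA, hg, hI⟩ := exists_measure_of_density (hS.1 (hf 0)).1.1.1
  have hγm : γ.fst = μm := by
    ext A hAm
    have h1 := (hS.1 (hf 0)).1.1.2 A hAm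
    rw [hℓm, ← hA _ (measurable_fst hAm)] at h1
    rw [Measure.fst_apply hAm]
    rwa [measureReal_eq_measureReal_iff] at h1
  have hγp : γ.snd = μp := by
    ext B hBm
    have h1 := (hS.1 (hf 0)).1.2 B hBm
    rw [hℓp, ← hA _ (measurable_snd hBm)] at h1
    rw [Measure.snd_apply hBm]
    rwa [measureReal_eq_measureReal_iff] at h1
  refine ⟨γ, ⟨?_⟩, hγm, hγp, ?_, hI.trans_le hfM⟩
  · rw [← Measure.fst_univ, hγm, measure_univ]
  · rw [hg, ← hℓ]
    refine ge_of_tendsto' (f := fun n : ℕ ↦ v + 1 / ((n : ℝ) + 1)) (x := atTop) ?_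
      fun n ↦ (hS.1 (hf n)).2
    simpa using (tendsto_one_div_add_atTop_nhds_zero_nat (𝕜 := ℝ)).const_add v

lemma Ent_eq_top_or_exists_nonneg {Ω : Type*} [MeasurableSpace Ω] (γ q : Measure Ω)
    [IsProbabilityMeasure γ] [IsProbabilityMeasure q] :
    Ent γ q = ⊤ ∨ ∃ e : ℝ, 0 ≤ e ∧ Ent γ q = e := by
  rw [Ent_eq_klDiv]
  rcases eq_or_ne (klDiv γ q) ∞ with h | h
  · simp [h]
  · exact .inr ⟨_, ENNReal.toReal_nonneg, (EReal.coe_ennreal_toReal h).symm⟩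

lemma entCost_le {γ : Measure (α × β)} (hγ : IsProbabilityMeasure γ) (hm : γ.fst = μm)
    (hp : γ.snd = μp) (ε : ℝ) :
    entCost μm μp c ε ≤ ((∫ p, c p ∂γ : ℝ) : EReal) + (ε : EReal) * Ent γ (μm.prod μp) :=
  sInf_le ⟨γ, hγ, hm, hp, rfl⟩

variable [IsProbabilityMeasure μm] [IsProbabilityMeasure μp]

lemma coe_le_entCost {ε b : ℝ} (hε : 0 < ε)
    (h : ∀ γ : Measure (α × β), IsProbabilityMeasure γ → γ.fst = μm → γ.snd = μp →
      ∀ e : ℝ, 0 ≤ e → Ent γ (μm.prod μp) = e → b ≤ ∫ p, c p ∂γ + ε * e) :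
    (b : EReal) ≤ entCost μm μp c ε := by
  refine le_sInf ?_
  rintro _ ⟨γ, hγ, hm, hp, rfl⟩
  rcases Ent_eq_top_or_exists_nonneg γ (μm.prod μp) with htop | ⟨e, he, hEnt⟩
  · rw [htop, EReal.coe_mul_top_of_pos hε, EReal.coe_add_top]
    exact le_top
  · rw [hEnt]
    exact_mod_cast h γ hγ hm hp e he hEnt

/-- Couplings whose cost is close to optimal have entropy not much below the least entropy of an
optimal coupling. -/
lemma exists_forall_lt_Ent_of_integral_le (hc : AEStronglyMeasurable c (μm.prod μp)) {C : ℝ}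
    (hC : ∀ᵐ x ∂μm.prod μp, ‖c x‖ ≤ C) {v m : ℝ}
    (h : ∀ γ : Measure (α × β), IsProbabilityMeasure γ → γ.fst = μm → γ.snd = μp →
      ∫ p, c p ∂γ ≤ v → (m : EReal) < Ent γ (μm.prod μp)) :
    ∃ δ > 0, ∀ γ : Measure (α × β), IsProbabilityMeasure γ → γ.fst = μm → γ.snd = μp →
      ∫ p, c p ∂γ ≤ v + δ → (m : EReal) < Ent γ (μm.prod μp) := by
  by_contra! hcon
  have hle (γ : Measure (α × β)) [IsProbabilityMeasure γ] (hm : 0 ≤ m) :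
      klDiv γ (μm.prod μp) ≤ ENNReal.ofReal m ↔ Ent γ (μm.prod μp) ≤ m := by
    rw [Ent_eq_klDiv, ← EReal.coe_ennreal_le_coe_ennreal_iff, EReal.coe_ennreal_ofReal,
      max_eq_left hm]
  have hm : 0 ≤ m := by
    obtain ⟨γ, hγ, -, -, -, hE⟩ := hcon 1 one_pos
    rw [Ent_eq_klDiv] at hE
    exact_mod_cast (EReal.coe_ennreal_nonneg _).trans hE
  obtain ⟨γ, hγ, hγm, hγp, hγc, hγM⟩ := exists_coupling_of_forall_approx hc hC
    (ENNReal.ofReal_ne_top (r := m)) fun n ↦ by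
      obtain ⟨γ, hγ, hγm, hγp, hγc, hE⟩ := hcon (1 / (n + 1)) (by positivity)
      exact ⟨γ, hγ, hγm, hγp, hγc, (hle γ hm).2 hE⟩
  exact ((hle γ hm).1 hγM).not_gt (h γ hγ hγm hγp hγc)

/-- Right differentiability at zero of the entropic cost, for an almost everywhere bounded cost
on a product of arbitrary probability spaces. -/
theorem tendsto_entCost_sub_div (hc : AEStronglyMeasurable c (μm.prod μp)) {C : ℝ}
    (hC : ∀ᵐ x ∂μm.prod μp, ‖c x‖ ≤ C) (Opt : Set (Measure (α × β)))
    (hOpt : Opt = {γ | IsProbabilityMeasure γ ∧ γ.fst = μm ∧ γ.snd = μp ∧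
      ((∫ p, c p ∂γ : ℝ) : EReal) = entCost μm μp c 0})
    (hfinite : ∃ γ0 ∈ Opt, Ent γ0 (μm.prod μp) ≠ ⊤) :
    Tendsto (fun ε : ℝ ↦ ((entCost μm μp c ε).toReal - (entCost μm μp c 0).toReal) / ε)
      (𝓝[>] 0) (𝓝 (sInf ((fun γ ↦ Ent γ (μm.prod μp)) '' Opt)).toReal) := by
  obtain ⟨γ₀, hγ₀, hfin⟩ := hfinite
  have hγ₀' := hγ₀
  rw [hOpt] at hγ₀'
  obtain ⟨hγ₀P, hγ₀m, hγ₀p, hγ₀c⟩ := hγ₀'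
  set v : ℝ := ∫ p, c p ∂γ₀
  have hlb (γ : Measure (α × β)) (hγ : IsProbabilityMeasure γ) (hm : γ.fst = μm)
      (hp : γ.snd = μp) : v ≤ ∫ p, c p ∂γ := by
    have := hγ₀c.trans_le (entCost_le (c := c) hγ hm hp 0)
    rw [EReal.coe_zero, zero_mul, add_zero] at this
    exact_mod_cast this
  have hmem {γ : Measure (α × β)} (hγ : γ ∈ Opt) :
      IsProbabilityMeasure γ ∧ γ.fst = μm ∧ γ.snd = μp ∧ ∫ p, c p ∂γ = v := by
    rw [hOpt] at hγ
    refine ⟨hγ.1, hγ.2.1, hγ.2.2.1, ?_⟩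
    exact_mod_cast hγ.2.2.2.trans hγ₀c.symm
  set L := sInf ((fun γ ↦ Ent γ (μm.prod μp)) '' Opt)
  have hLtop : L ≠ ⊤ := ne_top_of_le_ne_top hfin (sInf_le ⟨γ₀, hγ₀, rfl⟩)
  have hL0 : 0 ≤ L := by
    refine le_sInf ?_
    rintro _ ⟨γ, hγ, rfl⟩
    have := (hmem hγ).1
    simp only [Ent_eq_klDiv]
    exact EReal.coe_ennreal_nonneg _
  have hL : (L.toReal : EReal) = L := EReal.coe_toReal hLtop (ne_bot_of_le_ne_bot (by simp) hL0)
  have hupper {γ : Measure (α × β)} (hγ : γ ∈ Opt) {e : ℝ} (he : Ent γ (μm.prod μp) = e) (ε : ℝ) :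
      entCost μm μp c ε ≤ ((v + ε * e : ℝ) : EReal) := by
    obtain ⟨hP, hm, hp, hcγ⟩ := hmem hγ
    have := entCost_le (c := c) hP hm hp ε
    rw [hcγ, he] at this
    exact_mod_cast this
  obtain ⟨e₀, -, he₀⟩ := (Ent_eq_top_or_exists_nonneg γ₀ (μm.prod μp)).resolve_left hfin
  have htop (ε : ℝ) : entCost μm μp c ε ≠ ⊤ :=
    ne_top_of_le_ne_top (EReal.coe_ne_top _) (hupper hγ₀ he₀ ε)
  have hbot {ε : ℝ} (hε : 0 < ε) : entCost μm μp c ε ≠ ⊥ :=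
    ne_bot_of_le_ne_bot (EReal.coe_ne_bot v) (coe_le_entCost hε fun γ hγ hm hp e he _ ↦
      (hlb γ hγ hm hp).trans (le_add_of_nonneg_right (mul_nonneg hε.le he)))
  rw [← hγ₀c, EReal.toReal_coe]
  refine tendsto_order.2 ⟨fun a ha ↦ ?_, fun a ha ↦ ?_⟩
  · obtain ⟨m, ham, hmL⟩ := exists_between ha
    obtain ⟨δ, hδ, hδm⟩ := exists_forall_lt_Ent_of_integral_le (v := v) (m := m) hc hC
      fun γ hγ hm hp hcγ ↦ by
        refine lt_of_lt_of_le (EReal.coe_lt_coe_iff.2 hmL) (hL.trans_le (sInf_le ⟨γ, ?_, rfl⟩))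
        rw [hOpt]
        refine ⟨hγ, hm, hp, ?_⟩
        rw [← hγ₀c, hcγ.antisymm (hlb γ hγ hm hp)]
    have hsmall : ∀ᶠ ε : ℝ in 𝓝[>] 0, ε * m < δ :=
      (((continuous_id.mul continuous_const).tendsto' 0 0 (zero_mul m)).eventually_lt_const
        hδ).filter_mono nhdsWithin_le_nhds
    filter_upwards [hsmall, self_mem_nhdsWithin] with ε hεδ hε
    rw [mem_Ioi] at hε
    have hlow : ((v + ε * m : ℝ) : EReal) ≤ entCost μm μp c ε := by
      refine coe_le_entCost hε fun γ hγ hm hp e he hE ↦ ?_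
      rcases le_or_gt (∫ p, c p ∂γ) (v + δ) with hcγ | hcγ
      · have h1 := hδm γ hγ hm hp hcγ
        rw [hE, EReal.coe_lt_coe_iff] at h1
        exact add_le_add (hlb γ hγ hm hp) (mul_le_mul_of_nonneg_left h1.le hε.le)
      · have := mul_nonneg hε.le he
        linarith
    have h1 := EReal.toReal_le_toReal hlow (EReal.coe_ne_bot _) (htop ε)
    rw [EReal.toReal_coe] at h1
    rw [lt_div_iff₀ hε]
    nlinarith
  · have hLa : L < (a : EReal) := by rwa [← hL, EReal.coe_lt_coe_iff]
    obtain ⟨_, ⟨γ, hγ, rfl⟩, hγa⟩ := sInf_lt_iff.1 hLa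
    have := (hmem hγ).1
    obtain ⟨e, -, he⟩ := (Ent_eq_top_or_exists_nonneg γ (μm.prod μp)).resolve_left hγa.ne_top
    simp only [he, EReal.coe_lt_coe_iff] at hγa
    filter_upwards [self_mem_nhdsWithin] with ε hε
    rw [mem_Ioi] at hε
    have h1 := EReal.toReal_le_toReal (hupper hγ he ε) (hbot hε) (EReal.coe_ne_top _)
    rw [EReal.toReal_coe] at h1
    rw [div_lt_iff₀ hε]
    nlinarith

end Coupling

lemma ae_mem_msupport {X : Type*} [TopologicalSpace X] [HereditarilyLindelofSpace X]
    [MeasurableSpace X] (μ : Measure X) : ∀ᵐ x ∂μ, x ∈ msupport μ := by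
  have h : msupport μ = μ.support := by
    rw [Measure.support_eq_forall_isOpen]
    ext x
    simp only [msupport, mem_ofPred_eq, pos_iff_ne_zero]
    exact forall_congr' fun U ↦ forall_comm
  rw [h]
  exact Measure.support_mem_ae

/-- If some optimal transport plan has finite entropy, then
`(v_ε − v₀)/ε → inf { Ent(γ | μ⁻⊗μ⁺) : γ optimal }` as `ε → 0⁺`. -/
theorem entCost_right_derivative_at_zero {d : ℕ}
    (μm μp : Measure (EuclideanSpace ℝ (Fin d)))
    [IsProbabilityMeasure μm] [IsProbabilityMeasure μp]
    (hXm : IsCompact (msupport μm)) (hXp : IsCompact (msupport μp))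
    (c : EuclideanSpace ℝ (Fin d) × EuclideanSpace ℝ (Fin d) → ℝ)
    (hc : ContinuousOn c (msupport μm ×ˢ msupport μp))
    (Opt : Set (Measure (EuclideanSpace ℝ (Fin d) × EuclideanSpace ℝ (Fin d))))
    (hOpt : Opt = {γ | IsProbabilityMeasure γ ∧ γ.fst = μm ∧ γ.snd = μp ∧
      ((∫ p, c p ∂γ : ℝ) : EReal) = entCost μm μp c 0})
    (hfinite : ∃ γ0 ∈ Opt, Ent γ0 (μm.prod μp) ≠ ⊤) :
    Tendsto (fun ε : ℝ => ((entCost μm μp c ε).toReal - (entCost μm μp c 0).toReal) / ε)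
      (nhdsWithin 0 (Set.Ioi 0))
      (nhds ((sInf ((fun γ => Ent γ (μm.prod μp)) '' Opt)).toReal)) := by
  have hK : ∀ᵐ p ∂μm.prod μp, p ∈ msupport μm ×ˢ msupport μp := by
    filter_upwards [Measure.quasiMeasurePreserving_fst.ae (ae_mem_msupport μm),
      Measure.quasiMeasurePreserving_snd.ae (ae_mem_msupport μp)] with p h1 h2
    exact ⟨h1, h2⟩
  obtain ⟨C, hC⟩ := (hXm.prod hXp).exists_bound_of_continuousOn hc
  refine tendsto_entCost_sub_div ?_ (hK.mono hC) Opt hOpt hfinite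
  rw [← Measure.restrict_eq_self_of_ae_mem hK]
  exact hc.aestronglyMeasurable (hXm.measurableSet.prod hXp.measurableSet)
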